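/- Assume x̄_∞ > 0, let T' ≥ 0 be such that |φ_{−t}(x_∞)₁| < |φ_{−t}(x_∞)₂| for all t ≥ T', and for y > 0 set t'_y = inf{t ≥ T' : |φ_{−t}(x_∞ + y D_∞ᵀ/|D_∞|²)₁| = |φ_{−t}(x_∞ + y D_∞ᵀ/|D_∞|²)₂|} and g(y) = φ_{−t'_y}(x_∞ + y D_∞ᵀ/|D_∞|²)₁. Then y^{−λ/(λ+μ)} g(y) → x̄_∞^{μ/(λ+μ)} as y ↓ 0 (intermediate claim in the proof of Theorem 3.5 for the time-reversed flow). -/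

import Mathlib

/-!
Write `v y = xinf + (y / ‖D‖²) • D`, `(a y, b y) = h (v y)` and
`E y t = (e^{μt} a y, e^{-λt} b y)`. The linearization turns the backward flow into `E`: as long as
`E y` stays in the ball of radius `δ` one has `φ_{-t} (v y) = h⁻¹ (E y t)` (`phi_eq_hinv`).

* Since `h x = x + o(x)`, the hypothesis `e^{λt} φ_{-t} xinf → (0, xbinf)` forces
  `h xinf = (0, xbinf)` (`h_eq_of_limit`); differentiating the conjugation at `xinf` and using
  `Dh 0 = 1`, the first row of `Dh xinf` is `D` (`fderiv_h_coord_zero`). Hence `a y / y → 1` and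
  `b y → xbinf` as `y ↓ 0`.
* For fixed `K`, no diagonal crossing happens in `[T', K]` once `y` is small, by compactness
  (`no_early_crossing`). A crossing does happen before the time at which `E0 = 2 * E1`, by
  the intermediate value theorem and `h⁻¹ z = z + o(z)` (`exists_crossing`). So the crossing time
  tends to infinity, and `E → 0` along it.
* At the crossing, `p = φ_{-t} (v y) = E + o(E)` has `|p₀| = |p₁|`, so `p₀`, `E0` and `E1` are
  all equivalent (`crossing_asymptotics`). The quantity `E0^{λ/(λ+μ)} E1^{μ/(λ+μ)}` is constant
  along the linear flow, hence `p₀ ~ a^{λ/(λ+μ)} b^{μ/(λ+μ)}`, which gives the limit.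
-/

open Filter Topology Metric Real RealInnerProductSpace

noncomputable section

/-- An element of `ℝ²` (with the Euclidean norm) with given coordinates. -/
def vec2 (a b : ℝ) : EuclideanSpace ℝ (Fin 2) := (WithLp.equiv 2 (Fin 2 → ℝ)).symm ![a, b]

/-- The setup of Turner, "Convergence of Markov processes near saddle fixed points",
Section 3: a saddle-type vector field `b x = B x + τ x` with `B = diag(-μ, λ)`,
a flow `φ` for `b`, a Hartman linearization `h` on a neighbourhood `U` of `0`,
and a radius `δ` on which `h` is close to the identity. -/
structure SaddleFlow where
  lam : ℝ
  mu : ℝ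
  lam_pos : 0 < lam
  mu_pos : 0 < mu
  /-- the nonlinearity τ -/
  tau : EuclideanSpace ℝ (Fin 2) → EuclideanSpace ℝ (Fin 2)
  tau_smooth : ContDiff ℝ 2 tau
  tau_zero : tau 0 = 0
  dtau_zero : fderiv ℝ tau 0 = 0
  /-- the flow of `b x = B x + τ x` -/
  phi : ℝ → EuclideanSpace ℝ (Fin 2) → EuclideanSpace ℝ (Fin 2)
  phi_zero : ∀ x, phi 0 x = x
  phi_hasDerivAt : ∀ t x, HasDerivAt (fun s => phi s x)
      (vec2 (-mu * (phi t x) 0) (lam * (phi t x) 1) + tau (phi t x)) t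
  phi_add : ∀ t s x, phi (t + s) x = phi t (phi s x)
  phi_contDiff : ∀ t, ContDiff ℝ 1 (phi t)
  /-- the domain of the Hartman linearization -/
  U : Set (EuclideanSpace ℝ (Fin 2))
  U_open : IsOpen U
  U_mem : (0 : EuclideanSpace ℝ (Fin 2)) ∈ U
  /-- the linearizing C¹ diffeomorphism `h : U → V = h '' U` and its inverse -/
  h : EuclideanSpace ℝ (Fin 2) → EuclideanSpace ℝ (Fin 2)
  hinv : EuclideanSpace ℝ (Fin 2) → EuclideanSpace ℝ (Fin 2)
  h_smooth : ∀ x ∈ U, ContDiffAt ℝ 1 h x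
  hinv_smooth : ∀ y ∈ h '' U, ContDiffAt ℝ 1 hinv y
  V_open : IsOpen (h '' U)
  left_inv : ∀ x ∈ U, hinv (h x) = x
  right_inv : ∀ y ∈ h '' U, h (hinv y) = y
  /-- the Hölder exponent of the partial derivatives of `h`, `h⁻¹` -/
  alpha0 : ℝ
  alpha0_mem : alpha0 ∈ Set.Ioc (0 : ℝ) 1
  holder : ∃ C : ℝ,
      (∀ x ∈ U, ∀ y ∈ U, ‖fderiv ℝ h x - fderiv ℝ h y‖ ≤ C * ‖x - y‖ ^ alpha0) ∧
      (∀ x ∈ h '' U, ∀ y ∈ h '' U,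
        ‖fderiv ℝ hinv x - fderiv ℝ hinv y‖ ≤ C * ‖x - y‖ ^ alpha0)
  /-- `h x = x + o(|x|)` as `x → 0` -/
  h_littleO : (fun x => h x - x) =o[𝓝 (0 : EuclideanSpace ℝ (Fin 2))] (fun x => x)
  /-- the conjugation `h (φ_t x) = e^{Bt} (h x)` -/
  h_conj : ∀ t x, x ∈ U → phi t x ∈ U →
      h (phi t x) = vec2 (Real.exp (-mu * t) * (h x) 0) (Real.exp (lam * t) * (h x) 1)
  /-- the radius δ -/
  delta : ℝ
  delta_pos : 0 < delta
  delta_lt_one : delta < 1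
  ball_sub : closedBall (0 : EuclideanSpace ℝ (Fin 2)) delta ⊆ U ∩ h '' U
  /-- `sup_{0<|x|<δ} max(|h x|/|x|, |h⁻¹ x|/|x|) < 2` -/
  h_ratio : ∃ c : ℝ, c < 2 ∧ ∀ x : EuclideanSpace ℝ (Fin 2), ‖x‖ < delta →
      ‖h x‖ ≤ c * ‖x‖ ∧ ‖hinv x‖ ≤ c * ‖x‖
  /-- `sup_{|x|<δ} max(‖Dh(x) − I‖, ‖Dh⁻¹(x) − I‖) < 1/2` -/
  deriv_close : ∃ c : ℝ, c < 1/2 ∧ ∀ x : EuclideanSpace ℝ (Fin 2), ‖x‖ < delta →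
      ‖fderiv ℝ h x - ContinuousLinearMap.id ℝ (EuclideanSpace ℝ (Fin 2))‖ ≤ c ∧
      ‖fderiv ℝ hinv x - ContinuousLinearMap.id ℝ (EuclideanSpace ℝ (Fin 2))‖ ≤ c

/-! ### Coordinates in the plane -/

lemma vec2_zero (a b : ℝ) : vec2 a b 0 = a := rfl
lemma vec2_one (a b : ℝ) : vec2 a b 1 = b := rfl

lemma vec2_eta (x : EuclideanSpace ℝ (Fin 2)) : vec2 (x 0) (x 1) = x := by
  ext i; fin_cases i <;> rfl

lemma norm_vec2_le (a b : ℝ) : ‖vec2 a b‖ ≤ |a| + |b| := by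
  rw [EuclideanSpace.norm_eq, Fin.sum_univ_two, Real.sqrt_le_left (by positivity)]
  simp only [vec2_zero, vec2_one, Real.norm_eq_abs]
  nlinarith [abs_nonneg a, abs_nonneg b]

lemma abs_coord_le (x : EuclideanSpace ℝ (Fin 2)) (i : Fin 2) : |x i| ≤ ‖x‖ :=
  PiLp.norm_apply_le x i

lemma continuous_vec2 : Continuous fun q : ℝ × ℝ => vec2 q.1 q.2 := by
  unfold vec2
  refine (PiLp.continuous_toLp 2 _).comp ?_
  refine continuous_pi fun i => ?_
  fin_cases i <;> simp <;> fun_prop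

/-! ### The linearization near the fixed point -/

namespace SaddleFlow
variable (S : SaddleFlow)

lemma mem_U {x : EuclideanSpace ℝ (Fin 2)} (hx : ‖x‖ ≤ S.delta) : x ∈ S.U :=
  (S.ball_sub (by simpa using hx)).1

lemma mem_V {x : EuclideanSpace ℝ (Fin 2)} (hx : ‖x‖ ≤ S.delta) : x ∈ S.h '' S.U :=
  (S.ball_sub (by simpa using hx)).2

lemma h_zero : S.h 0 = 0 := by
  have := (S.h_littleO.bound one_pos).self_of_nhds
  simpa using this

lemma hasFDerivAt_h : HasFDerivAt S.h (ContinuousLinearMap.id ℝ (EuclideanSpace ℝ (Fin 2))) 0 := by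
  rw [hasFDerivAt_iff_isLittleO_nhds_zero]
  simpa [S.h_zero] using S.h_littleO

lemma hinv_zero : S.hinv 0 = 0 := by
  simpa [S.h_zero] using S.left_inv 0 S.U_mem

/-- The inverse linearization is tangent to the identity, since its derivative at `0` is the
inverse of `Dh 0 = 1`. -/
lemma hinv_littleO :
    (fun z => S.hinv z - z) =o[𝓝 (0 : EuclideanSpace ℝ (Fin 2))] (fun z => z) := by
  have h0 : (0 : EuclideanSpace ℝ (Fin 2)) ∈ S.h '' S.U := ⟨0, S.U_mem, S.h_zero⟩
  have hd : HasFDerivAt S.hinv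
      ((ContinuousLinearEquiv.refl ℝ (EuclideanSpace ℝ (Fin 2))).symm :
        EuclideanSpace ℝ (Fin 2) →L[ℝ] EuclideanSpace ℝ (Fin 2)) 0 := by
    refine HasFDerivAt.of_local_left_inverse (f := S.h) (S.hinv_smooth 0 h0).continuousAt ?_ ?_
    · rw [S.hinv_zero]; exact S.hasFDerivAt_h
    · filter_upwards [S.V_open.mem_nhds h0] with z hz using S.right_inv z hz
  rw [hasFDerivAt_iff_isLittleO_nhds_zero] at hd
  simpa [S.hinv_zero] using hd

lemma h_conj_neg {t : ℝ} {x : EuclideanSpace ℝ (Fin 2)} (hx : x ∈ S.U) (ht : S.phi (-t) x ∈ S.U) :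
    S.h (S.phi (-t) x) = vec2 (exp (S.mu * t) * S.h x 0) (exp (-(S.lam * t)) * S.h x 1) := by
  simpa using S.h_conj (-t) x hx ht

lemma continuous_backward (x : EuclideanSpace ℝ (Fin 2)) : Continuous fun t => S.phi (-t) x := by
  have : Continuous fun t => S.phi t x :=
    continuous_iff_continuousAt.2 fun t => (S.phi_hasDerivAt t x).continuousAt
  exact this.comp continuous_neg

/-- Along the backward trajectory of a point `x` of the ball of radius `δ / 8`, the linearization
stays valid as long as the unstable coordinate of the linear trajectory is at most `δ / 2`. The
conjugation hypothesis needs `φ_{-t} x ∈ U`, which is propagated in time by connectedness. -/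
lemma phi_eq_hinv {x : EuclideanSpace ℝ (Fin 2)} (hx : ‖x‖ < S.delta / 8) {T : ℝ}
    (hT : exp (S.mu * T) * |S.h x 0| ≤ S.delta / 2) {t : ℝ} (ht : t ∈ Set.Icc 0 T) :
    S.phi (-t) x = S.hinv (vec2 (exp (S.mu * t) * S.h x 0) (exp (-(S.lam * t)) * S.h x 1)) := by
  have hδ := S.delta_pos
  have hxU : x ∈ S.U := S.mem_U (by linarith)
  set E : ℝ → EuclideanSpace ℝ (Fin 2) := fun t =>
    vec2 (exp (S.mu * t) * S.h x 0) (exp (-(S.lam * t)) * S.h x 1) with hE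
  have hEc : Continuous E :=
    continuous_vec2.comp (f := fun t : ℝ =>
      (exp (S.mu * t) * S.h x 0, exp (-(S.lam * t)) * S.h x 1)) (by fun_prop)
  have hEV : ∀ t ∈ Set.Icc 0 T, E t ∈ S.h '' S.U := by
    intro t ht
    obtain ⟨c, hc, hr⟩ := S.h_ratio
    have h1 : |S.h x 1| ≤ S.delta / 4 := by
      have := (hr x (by linarith)).1
      have := abs_coord_le (S.h x) 1
      nlinarith [norm_nonneg x]
    have e1 : exp (S.mu * t) ≤ exp (S.mu * T) :=
      exp_le_exp.2 (mul_le_mul_of_nonneg_left ht.2 S.mu_pos.le)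
    have e2 : exp (-(S.lam * t)) ≤ 1 :=
      exp_le_one_iff.2 (by have := mul_nonneg S.lam_pos.le ht.1; linarith)
    refine S.mem_V ((norm_vec2_le _ _).trans ?_)
    rw [abs_mul, abs_mul, abs_exp, abs_exp]
    have i1 := mul_le_mul_of_nonneg_right e1 (abs_nonneg (S.h x 0))
    have i2 := mul_le_mul_of_nonneg_right e2 (abs_nonneg (S.h x 1))
    linarith
  have key : Set.Icc 0 T ⊆ {t | S.phi (-t) x = S.hinv (E t)} := by
    refine IsClosed.Icc_subset_of_forall_mem_nhdsWithin ?_ ?_ ?_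
    · have hcont : ContinuousOn (fun t => S.hinv (E t)) (Set.Icc 0 T) := fun t ht =>
        (ContinuousAt.comp (f := E) (S.hinv_smooth _ (hEV t ht)).continuousAt
          hEc.continuousAt).continuousWithinAt
      have := ((S.continuous_backward x).continuousOn.prodMk hcont).preimage_isClosed_of_isClosed
        isClosed_Icc isClosed_diagonal
      rw [Set.inter_comm]
      exact this
    · simp [hE, S.phi_zero]
      rw [vec2_eta, S.left_inv x hxU]
    · rintro s ⟨hs, hsT⟩
      have hsU : S.phi (-s) x ∈ S.U := by
        obtain ⟨z, hz, hzE⟩ := hEV s ⟨hsT.1, hsT.2.le⟩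
        have hs' : S.phi (-s) x = S.hinv (E s) := hs
        rw [hs', ← hzE, S.left_inv z hz]
        exact hz
      have : ∀ᶠ r in 𝓝 s, S.phi (-r) x ∈ S.U :=
        (S.continuous_backward x).continuousAt.eventually (S.U_open.mem_nhds hsU)
      filter_upwards [nhdsWithin_le_nhds this] with r hr
      change S.phi (-r) x = S.hinv (vec2 _ _)
      rw [← S.h_conj_neg hxU hr, S.left_inv _ hr]
  exact key ht

/-- The linearization sends a point `x` of the backward stable manifold to `(0, c)`, where `c` is
the limit of the rescaled second coordinate of its backward trajectory. -/
lemma h_eq_of_limit {x : EuclideanSpace ℝ (Fin 2)} (hx : x ∈ S.U)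
    (hst : Tendsto (fun t => S.phi (-t) x) atTop (𝓝 0)) {c : ℝ}
    (hc : Tendsto (fun t => exp (S.lam * t) • S.phi (-t) x) atTop (𝓝 (vec2 0 c))) :
    S.h x 0 = 0 ∧ S.h x 1 = c := by
  have hU : ∀ᶠ t in atTop, S.phi (-t) x ∈ S.U := hst.eventually (S.U_open.mem_nhds S.U_mem)
  have ho : (fun t => exp (S.lam * t) • (S.h (S.phi (-t) x) - S.phi (-t) x)) =o[atTop]
      fun t => exp (S.lam * t) • S.phi (-t) x :=
    (Asymptotics.isBigO_refl _ _).smul_isLittleO (S.h_littleO.comp_tendsto hst)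
  have hlim0 : Tendsto (fun t => exp (S.lam * t) • (S.h (S.phi (-t) x) - S.phi (-t) x)) atTop
      (𝓝 0) :=
    (Asymptotics.isLittleO_one_iff ℝ).1 (ho.trans_isBigO (hc.isBigO_one ℝ))
  have hlim : Tendsto (fun t => exp (S.lam * t) • S.h (S.phi (-t) x)) atTop (𝓝 (vec2 0 c)) := by
    simpa [smul_sub] using hlim0.add hc
  have hco : ∀ i : Fin 2, Tendsto (fun t => exp (S.lam * t) * S.h (S.phi (-t) x) i) atTop
      (𝓝 (vec2 0 c i)) := fun i =>
    ((EuclideanSpace.proj (𝕜 := ℝ) i).continuous.tendsto _).comp hlim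
  constructor
  · have h0 := (hco 0).abs
    rw [vec2_zero, abs_zero] at h0
    -- `e^{λt} h(φ_{-t} x)₀ = e^{(λ+μ)t} h(x)₀` tends to `0`, yet dominates `h(x)₀`.
    have : |S.h x 0| ≤ 0 := by
      refine ge_of_tendsto h0 ?_
      filter_upwards [hU, eventually_ge_atTop 0] with t ht ht0
      rw [S.h_conj_neg hx ht, vec2_zero, ← mul_assoc, ← exp_add, abs_mul, abs_exp]
      refine le_mul_of_one_le_left (abs_nonneg _) (one_le_exp ?_)
      have := S.lam_pos; have := S.mu_pos; positivity
    exact abs_nonpos_iff.1 this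
  · refine tendsto_nhds_unique (tendsto_const_nhds.congr' ?_) (hco 1)
    filter_upwards [hU] with t ht
    rw [S.h_conj_neg hx ht, vec2_one, ← mul_assoc, ← exp_add, add_neg_cancel, exp_zero, one_mul]

/-- The first row of `Dh x` is the limit `D` of the rescaled derivative of the backward flow. -/
lemma fderiv_h_coord_zero {x : EuclideanSpace ℝ (Fin 2)} (hx : x ∈ S.U)
    (hst : Tendsto (fun t => S.phi (-t) x) atTop (𝓝 0)) {D : EuclideanSpace ℝ (Fin 2)}
    (hD : Tendsto (fun t => exp (-S.mu * t) • fderiv ℝ (S.phi (-t)) x) atTop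
      (𝓝 ((innerSL ℝ D).smulRight (EuclideanSpace.single 0 (1 : ℝ)))))
    (w : EuclideanSpace ℝ (Fin 2)) : fderiv ℝ S.h x w 0 = inner ℝ D w := by
  have hU : ∀ᶠ t in atTop, S.phi (-t) x ∈ S.U := hst.eventually (S.U_open.mem_nhds S.U_mem)
  have hdc : ContinuousAt (fderiv ℝ S.h) 0 :=
    ((S.h_smooth 0 S.U_mem).fderiv_right (m := 0) le_rfl).continuousAt
  have hA : Tendsto (fun t => fderiv ℝ S.h (S.phi (-t) x)) atTop
      (𝓝 (ContinuousLinearMap.id ℝ _)) := by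
    have := hdc.tendsto.comp hst
    rwa [S.hasFDerivAt_h.fderiv] at this
  have happ := (isBoundedBilinearMap_apply (𝕜 := ℝ) (E := EuclideanSpace ℝ (Fin 2))
    (F := EuclideanSpace ℝ (Fin 2))).continuous
  have hB := (happ.tendsto (_, _)).comp
    (hA.prodMk_nhds ((happ.tendsto (_, w)).comp (hD.prodMk_nhds tendsto_const_nhds)))
  have hC := ((EuclideanSpace.proj (𝕜 := ℝ) (0 : Fin 2)).continuous.tendsto _).comp hB
  have hlim : (EuclideanSpace.proj (𝕜 := ℝ) (0 : Fin 2))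
      ((ContinuousLinearMap.id ℝ _)
        (((innerSL ℝ D).smulRight (EuclideanSpace.single 0 (1 : ℝ))) w)) = inner ℝ D w := by
    simp
  rw [hlim] at hC
  refine tendsto_nhds_unique (tendsto_const_nhds.congr' ?_) hC
  -- Differentiate `h (φ_{-t} z)₀ = e^{μt} h(z)₀` at `z = x`.
  filter_upwards [hU] with t ht
  have hphi : HasFDerivAt (S.phi (-t)) (fderiv ℝ (S.phi (-t)) x) x :=
    ((S.phi_contDiff (-t)).differentiable one_ne_zero x).hasFDerivAt
  have h1 := (((S.h_smooth _ ht).differentiableAt one_ne_zero).hasFDerivAt).comp x hphi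
  have h2 := ((EuclideanSpace.proj (𝕜 := ℝ) (0 : Fin 2)).hasFDerivAt).comp x h1
  have h3 := ((EuclideanSpace.proj (𝕜 := ℝ) (0 : Fin 2)).hasFDerivAt).comp x
    (((S.h_smooth _ hx).differentiableAt one_ne_zero).hasFDerivAt)
  have h4 := h3.const_mul (exp (S.mu * t))
  have heq : (EuclideanSpace.proj (𝕜 := ℝ) (0 : Fin 2) ∘ (S.h ∘ S.phi (-t))) =ᶠ[𝓝 x]
      fun z => exp (S.mu * t) * (EuclideanSpace.proj (𝕜 := ℝ) (0 : Fin 2) ∘ S.h) z := by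
    filter_upwards [S.U_open.mem_nhds hx,
      hphi.continuousAt.eventually (S.U_open.mem_nhds ht)] with z hz hz'
    simp [S.h_conj_neg hz hz', vec2_zero]
  have h5 := congrArg (fun L => L w) ((h4.congr_of_eventuallyEq heq).unique h2)
  simp at h5
  simp
  rw [← h5, ← mul_assoc, ← exp_add]
  simp

end SaddleFlow

/-! ### Points near the diagonal -/

/-- If `p = E + o(E)` with `E` in the open first quadrant and `p` on the diagonals, then `p₀` is
equivalent to every weighted geometric mean of the coordinates of `E`. -/
lemma crossing_asymptotics {ι : Type*} {l : Filter ι} {E0 E1 p0 p1 : ι → ℝ}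
    (h0 : ∀ᶠ i in l, 0 < E0 i) (h1 : ∀ᶠ i in l, 0 < E1 i)
    (hp0 : (fun i => p0 i - E0 i) =o[l] fun i => E0 i + E1 i)
    (hp1 : (fun i => p1 i - E1 i) =o[l] fun i => E0 i + E1 i)
    (hd : ∀ᶠ i in l, |p0 i| = |p1 i|) {α β : ℝ} (hαβ : α + β = 1) :
    Tendsto (fun i => p0 i / (E0 i ^ α * E1 i ^ β)) l (𝓝 1) := by
  have t0 := hp0.tendsto_div_nhds_zero
  have t1 := hp1.tendsto_div_nhds_zero
  -- Both `|p₀| - E0` and `|p₁| - E1` are `o(E0 + E1)`, hence so is `E0 - E1`.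
  have hu : Tendsto (fun i => E0 i / (E0 i + E1 i)) l (𝓝 (1 / 2)) := by
    rw [tendsto_iff_norm_sub_tendsto_zero]
    have := t0.abs.add t1.abs
    simp only [abs_zero, add_zero] at this
    refine squeeze_zero' (Eventually.of_forall fun _ => norm_nonneg _) ?_ this
    filter_upwards [h0, h1, hd] with i h0 h1 hd
    have hN : 0 < E0 i + E1 i := by positivity
    have e : E0 i / (E0 i + E1 i) - 1 / 2 = (E0 i - E1 i) / 2 / (E0 i + E1 i) := by
      field_simp; ring
    rw [e, Real.norm_eq_abs, abs_div, abs_div (p0 i - E0 i), abs_div (p1 i - E1 i), ← add_div]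
    gcongr
    have a0 := abs_abs_sub_abs_le_abs_sub (p0 i) (E0 i)
    have a1 := abs_abs_sub_abs_le_abs_sub (p1 i) (E1 i)
    rw [abs_of_pos h0] at a0
    rw [abs_of_pos h1] at a1
    rw [abs_div, abs_two]
    have : |E0 i - E1 i| ≤ |p0 i - E0 i| + |p1 i - E1 i| := by
      rw [hd] at a0
      grind
    linarith [abs_nonneg (E0 i - E1 i)]
  have hw : Tendsto (fun i => E1 i / (E0 i + E1 i)) l (𝓝 (1 / 2)) := by
    have := hu.const_sub 1
    norm_num at this ⊢
    refine this.congr' ?_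
    filter_upwards [h0, h1] with i h0 h1
    field_simp; ring
  have hp : Tendsto (fun i => p0 i / (E0 i + E1 i)) l (𝓝 (1 / 2)) := by
    have := t0.add hu
    simp only [zero_add] at this
    refine this.congr fun i => ?_
    ring
  have := hp.div ((hu.rpow_const (p := α) (Or.inl (by norm_num))).mul
    (hw.rpow_const (p := β) (Or.inl (by norm_num)))) (by positivity)
  rw [← rpow_add (by norm_num), hαβ, rpow_one, div_self (by norm_num)] at this
  refine this.congr' ?_
  filter_upwards [h0, h1] with i h0 h1
  have hN : 0 < E0 i + E1 i := by positivity
  simp only [Pi.div_apply]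
  rw [div_rpow h0.le hN.le, div_rpow h1.le hN.le, div_mul_div_comm, ← rpow_add hN, hαβ, rpow_one,
    div_div_div_cancel_right₀ (ne_of_gt hN)]

/-! ### The crossing time -/

namespace SaddleFlow
variable (S : SaddleFlow)

/-- Near `0`, `h⁻¹` maps the half-lines of slope `2` and `1/2` in the upper half-plane strictly to
either side of the diagonals. -/
lemma hinv_diagonal_compare : ∀ᶠ z in 𝓝 (0 : EuclideanSpace ℝ (Fin 2)), 0 < z 1 →
    (z 0 = 1 / 2 * z 1 → |S.hinv z 0| < |S.hinv z 1|) ∧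
    (z 0 = 2 * z 1 → |S.hinv z 1| < |S.hinv z 0|) := by
  filter_upwards [S.hinv_littleO.bound (c := 1 / 10) (by norm_num)] with z hz hz1
  have hn : ‖z‖ ≤ |z 0| + |z 1| := by
    simpa only [vec2_eta] using norm_vec2_le (z 0) (z 1)
  have c0 := (abs_coord_le (S.hinv z - z) 0).trans hz
  have c1 := (abs_coord_le (S.hinv z - z) 1).trans hz
  rw [PiLp.sub_apply] at c0 c1
  rw [abs_of_pos hz1] at hn
  constructor <;> intro h <;> have hz0 : 0 < z 0 := by linarith
  all_goals
    rw [abs_of_pos hz0] at hn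
    rw [abs_le] at c0 c1
    rw [abs_of_pos (a := S.hinv z 0) (by linarith), abs_of_pos (a := S.hinv z 1) (by linarith)]
    linarith

/-- If the backward trajectory of `v 0` stays off the diagonals after time `T'`, then so do the
trajectories of `v y` on any given compact time interval, for `y` small. The flow is only known to
be continuous in each variable separately; joint continuity comes from the linearization. -/
lemma no_early_crossing {v : ℝ → EuclideanSpace ℝ (Fin 2)} (hv : ContinuousAt v 0)
    (hv0 : ‖v 0‖ < S.delta / 8) (ha0 : S.h (v 0) 0 = 0) {T' : ℝ} (hT' : 0 ≤ T')
    (hdiag : ∀ t, T' ≤ t → |S.phi (-t) (v 0) 0| < |S.phi (-t) (v 0) 1|) (K : ℝ) :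
    ∀ᶠ y in 𝓝 0, ∀ t ∈ Set.Icc T' K, |S.phi (-t) (v y) 0| < |S.phi (-t) (v y) 1| := by
  have hδ := S.delta_pos
  have hh : ContinuousAt (fun y => S.h (v y)) 0 :=
    ContinuousAt.comp (S.h_smooth _ (S.mem_U (by linarith))).continuousAt hv
  have hhi : ∀ i : Fin 2, ContinuousAt (fun y => S.h (v y) i) 0 := fun i =>
    (EuclideanSpace.proj (𝕜 := ℝ) i).continuous.continuousAt.comp hh
  have hsmall : ∀ T, ∀ᶠ y in 𝓝 0, exp (S.mu * T) * |S.h (v y) 0| ≤ S.delta / 2 := fun T => by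
    have : Tendsto (fun y => exp (S.mu * T) * |S.h (v y) 0|) (𝓝 0) (𝓝 0) := by
      simpa [ha0] using ((hhi 0).tendsto.abs.const_mul (exp (S.mu * T)))
    exact this.eventually_le_const (by positivity)
  have hvs : ∀ᶠ y in 𝓝 0, ‖v y‖ < S.delta / 8 := hv.norm.eventually_lt_const hv0
  let E : ℝ × ℝ → EuclideanSpace ℝ (Fin 2) := fun q =>
    vec2 (exp (S.mu * q.2) * S.h (v q.1) 0) (exp (-(S.lam * q.2)) * S.h (v q.1) 1)
  have htube : ∀ᶠ y in 𝓝 0, ∀ t ∈ Set.Icc T' K, |S.hinv (E (y, t)) 0| < |S.hinv (E (y, t)) 1| := by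
    refine isCompact_Icc.eventually_forall_of_forall_eventually
      (P := fun y t => |S.hinv (E (y, t)) 0| < |S.hinv (E (y, t)) 1|) fun t ht => ?_
    have ht0 : 0 ≤ t := hT'.trans ht.1
    have heq : S.phi (-t) (v 0) = S.hinv (E (0, t)) :=
      S.phi_eq_hinv hv0 (T := t) (by simp [ha0]; positivity) ⟨ht0, le_rfl⟩
    have hV : E (0, t) ∈ S.h '' S.U := by
      refine S.mem_V ?_
      obtain ⟨c, hc, hr⟩ := S.h_ratio
      have h1 : |S.h (v 0) 1| ≤ S.delta / 4 := by
        have := (hr (v 0) (by linarith)).1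
        have := abs_coord_le (S.h (v 0)) 1
        nlinarith [norm_nonneg (v 0)]
      have e2 : exp (-(S.lam * t)) ≤ 1 :=
        exp_le_one_iff.2 (by have := mul_nonneg S.lam_pos.le ht0; linarith)
      refine (norm_vec2_le _ _).trans ?_
      simp only [ha0, mul_zero, abs_zero, zero_add, abs_mul, abs_exp]
      have i2 := mul_le_mul_of_nonneg_right e2 (abs_nonneg (S.h (v 0) 1))
      linarith
    have hEc : ContinuousAt E (0, t) := by
      refine continuous_vec2.continuousAt.comp (f := fun q : ℝ × ℝ =>
        (exp (S.mu * q.2) * S.h (v q.1) 0, exp (-(S.lam * q.2)) * S.h (v q.1) 1)) ?_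
      have h0 : ContinuousAt (fun q : ℝ × ℝ => S.h (v q.1) 0) (0, t) :=
        ContinuousAt.comp (f := Prod.fst) (g := fun y => S.h (v y) 0) (hhi 0)
          continuousAt_fst
      have h1 : ContinuousAt (fun q : ℝ × ℝ => S.h (v q.1) 1) (0, t) :=
        ContinuousAt.comp (f := Prod.fst) (g := fun y => S.h (v y) 1) (hhi 1)
          continuousAt_fst
      exact (ContinuousAt.mul (by fun_prop) h0).prodMk (ContinuousAt.mul (by fun_prop) h1)
    have hF : ContinuousAt (fun q => S.hinv (E q)) (0, t) :=
      ContinuousAt.comp (f := E) (S.hinv_smooth _ hV).continuousAt hEc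
    have hFi : ∀ i : Fin 2, ContinuousAt (fun q => S.hinv (E q) i) (0, t) := fun i =>
      (EuclideanSpace.proj (𝕜 := ℝ) i).continuous.continuousAt.comp hF
    refine (hFi 0).abs.eventually_lt (hFi 1).abs ?_
    have := hdiag t ht.1
    rwa [heq] at this
  filter_upwards [hvs, hsmall K, htube] with y h1 h2 h3 t ht
  rw [S.phi_eq_hinv h1 h2 ⟨hT'.trans ht.1, ht.2⟩]
  exact h3 t ht

/-- The backward trajectory of `v y` crosses a diagonal between `T'` and a time `s y`, at which
the unstable coordinate of the linear trajectory is still small. -/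
lemma exists_crossing {v : ℝ → EuclideanSpace ℝ (Fin 2)} {l : Filter ℝ}
    (hv : ∀ᶠ y in l, ‖v y‖ < S.delta / 8)
    (ha : Tendsto (fun y => S.h (v y) 0) l (𝓝 0)) (ha0 : ∀ᶠ y in l, 0 < S.h (v y) 0)
    {c : ℝ} (hc : 0 < c) (hb : Tendsto (fun y => S.h (v y) 1) l (𝓝 c)) (T' : ℝ) :
    ∃ s : ℝ → ℝ, Tendsto (fun y => exp (S.mu * s y) * S.h (v y) 0) l (𝓝 0) ∧
      ∀ᶠ y in l, ∃ t ∈ Set.Icc T' (s y), |S.phi (-t) (v y) 0| = |S.phi (-t) (v y) 1| := by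
  have hδ := S.delta_pos
  have hlam := S.lam_pos
  have hmu := S.mu_pos
  set a : ℝ → ℝ := fun y => S.h (v y) 0
  set b : ℝ → ℝ := fun y => S.h (v y) 1
  have hb0 : ∀ᶠ y in l, 0 < b y := hb.eventually_const_lt hc
  -- `s θ y` is the time at which the linear trajectory satisfies `E0 = θ * E1`.
  let s : ℝ → ℝ → ℝ := fun θ y => log (θ * (b y / a y)) / (S.lam + S.mu)
  have hs : ∀ θ, 0 < θ → Tendsto (s θ) l atTop := fun θ hθ => by
    refine Tendsto.atTop_div_const (by positivity) (tendsto_log_atTop.comp ?_)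
    have : Tendsto (fun y => (a y)⁻¹) l atTop :=
      (tendsto_nhdsWithin_iff.2 ⟨ha, ha0⟩).inv_tendsto_nhdsGT_zero
    exact (hb.pos_mul_atTop hc this).const_mul_atTop hθ
  have heq : ∀ θ, 0 < θ → ∀ᶠ y in l,
      exp (S.mu * s θ y) * a y = θ * (exp (-(S.lam * s θ y)) * b y) := fun θ hθ => by
    filter_upwards [ha0, hb0] with y ha hb
    have ha : 0 < a y := ha
    have h1 : exp (S.mu * s θ y) * exp (S.lam * s θ y) = θ * (b y / a y) := by
      rw [← exp_add, ← exp_log (show 0 < θ * (b y / a y) by positivity)]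
      congr 1
      simp only [s]
      field_simp
      ring
    rw [exp_neg, eq_div_of_mul_eq (exp_pos _).ne' h1]
    field_simp
  have hE1 : ∀ θ, 0 < θ → Tendsto (fun y => exp (-(S.lam * s θ y)) * b y) l (𝓝 0) := fun θ hθ => by
    have := (tendsto_exp_neg_atTop_nhds_zero.comp ((hs θ hθ).const_mul_atTop hlam)).mul hb
    simpa using this
  have hE0 : ∀ θ, 0 < θ → Tendsto (fun y => exp (S.mu * s θ y) * a y) l (𝓝 0) := fun θ hθ => by
    have := (hE1 θ hθ).const_mul θ
    rw [mul_zero] at this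
    exact this.congr' ((heq θ hθ).mono fun y h => h.symm)
  have hE : ∀ θ, 0 < θ → Tendsto (fun y => vec2 (exp (S.mu * s θ y) * a y)
      (exp (-(S.lam * s θ y)) * b y)) l (𝓝 0) := fun θ hθ => by
    have := (continuous_vec2.tendsto (0, 0)).comp ((hE0 θ hθ).prodMk_nhds (hE1 θ hθ))
    have h00 : vec2 0 0 = 0 := by ext i; fin_cases i <;> rfl
    rwa [h00] at this
  refine ⟨s 2, hE0 2 two_pos, ?_⟩
  filter_upwards [hv, ha0, hb0, heq 2 two_pos, heq (1 / 2) (by norm_num),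
    (hs (1 / 2) (by norm_num)).eventually_ge_atTop T',
    (hs (1 / 2) (by norm_num)).eventually_ge_atTop 0,
    (hE 2 two_pos).eventually S.hinv_diagonal_compare,
    (hE (1 / 2) (by norm_num)).eventually S.hinv_diagonal_compare,
    (hE0 2 two_pos).eventually_le_const (show 0 < S.delta / 2 by positivity)]
    with y hv ha hb e2 e1 hT h0 d2 d1 hδ2
  have ha : 0 < a y := ha
  simp only [vec2_zero, vec2_one] at d1 d2
  have hle : s (1 / 2) y ≤ s 2 y := by
    simp only [s]
    gcongr
    norm_num
  have htraj : ∀ t ∈ Set.Icc 0 (s 2 y), S.phi (-t) (v y) =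
      S.hinv (vec2 (exp (S.mu * t) * a y) (exp (-(S.lam * t)) * b y)) := fun t ht =>
    S.phi_eq_hinv hv (T := s 2 y) (by rwa [abs_of_pos (show 0 < S.h (v y) 0 from ha)]) ht
  have f1 := (d1 (by positivity)).1 e1
  have f2 := (d2 (by positivity)).2 e2
  rw [← htraj _ ⟨h0, hle⟩] at f1
  rw [← htraj _ ⟨h0.trans hle, le_rfl⟩] at f2
  have hcoord : ∀ i : Fin 2, Continuous fun t => |S.phi (-t) (v y) i| := fun i =>
    ((EuclideanSpace.proj (𝕜 := ℝ) i).continuous.comp (S.continuous_backward (v y))).abs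
  obtain ⟨t, ht, htz⟩ := intermediate_value_Icc hle
    (f := fun t => |S.phi (-t) (v y) 0| - |S.phi (-t) (v y) 1|)
    ((hcoord 0).sub (hcoord 1)).continuousOn (show (0 : ℝ) ∈ _ from ⟨by linarith, by linarith⟩)
  exact ⟨t, ⟨hT.trans ht.1, ht.2⟩, by simpa [sub_eq_zero] using htz⟩

end SaddleFlow
/-! ### The limit -/

/-- Intermediate claim in the proof of Theorem 3.5 for the time-reversed flow: with
`t´_y` the first time `≥ T´` at which the backward trajectory from
`x_∞ + y D_∞ᵀ/|D_∞|²` hits the diagonal, and `g(y)` its first coordinate there, one has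
`y^{−λ/(λ+μ)} g(y) → x̄_∞^{μ/(λ+μ)}` as `y ↓ 0`. -/
theorem reversed_diagonal_crossing_point (S : SaddleFlow)
    (xinf : EuclideanSpace ℝ (Fin 2)) (hxinf_pos : 0 < ‖xinf‖) (hxinf_lt : ‖xinf‖ < S.delta / 8)
    (hxinf_stable : Tendsto (fun t => S.phi (-t) xinf) atTop (𝓝 (0 : EuclideanSpace ℝ (Fin 2))))
    (xbinf : ℝ) (hxbinf_pos : 0 < xbinf) (hxbinf_lt : |xbinf| < S.delta / 4)
    (hxbinf : Tendsto (fun t => Real.exp (S.lam * t) • S.phi (-t) xinf) atTop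
      (𝓝 (vec2 0 xbinf)))
    (Dinf : EuclideanSpace ℝ (Fin 2)) (hDinf_ne : Dinf ≠ 0)
    (hDinf : Tendsto (fun t => Real.exp (-S.mu * t) • fderiv ℝ (S.phi (-t)) xinf) atTop
      (𝓝 ((innerSL ℝ Dinf).smulRight (EuclideanSpace.single 0 (1 : ℝ)))))
    (T' : ℝ) (hT' : 0 ≤ T')
    (hdiag : ∀ t : ℝ, T' ≤ t → |S.phi (-t) xinf 0| < |S.phi (-t) xinf 1|)
    (g : ℝ → ℝ)
    (hg : ∀ y : ℝ, g y =
      S.phi (-(sInf {t : ℝ | T' ≤ t ∧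
          |S.phi (-t) (xinf + (y / ‖Dinf‖ ^ 2) • Dinf) 0| =
            |S.phi (-t) (xinf + (y / ‖Dinf‖ ^ 2) • Dinf) 1|}))
        (xinf + (y / ‖Dinf‖ ^ 2) • Dinf) 0) :
    Tendsto (fun y : ℝ => y ^ (-(S.lam / (S.lam + S.mu))) * g y) (𝓝[>] (0 : ℝ))
      (𝓝 (xbinf ^ (S.mu / (S.lam + S.mu)))) := by
  have hδ := S.delta_pos
  have hlam := S.lam_pos
  have hmu := S.mu_pos
  have hxU : xinf ∈ S.U := S.mem_U (by linarith)
  obtain ⟨hx0, hx1⟩ := S.h_eq_of_limit hxU hxinf_stable hxbinf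
  set v : ℝ → EuclideanSpace ℝ (Fin 2) := fun y => xinf + (y / ‖Dinf‖ ^ 2) • Dinf with hvdef
  set a : ℝ → ℝ := fun y => S.h (v y) 0 with hadef
  set b : ℝ → ℝ := fun y => S.h (v y) 1 with hbdef
  have hD0 : ‖Dinf‖ ≠ 0 := norm_ne_zero_iff.2 hDinf_ne
  have hv0 : v 0 = xinf := by simp [hvdef]
  have hvd : HasDerivAt v ((1 / ‖Dinf‖ ^ 2) • Dinf) 0 :=
    (((hasDerivAt_id (0 : ℝ)).div_const _).smul_const Dinf).const_add xinf
  have hh : HasFDerivAt S.h (fderiv ℝ S.h (v 0)) (v 0) := by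
    rw [hv0]
    exact ((S.h_smooth _ hxU).differentiableAt one_ne_zero).hasFDerivAt
  have had : HasDerivAt a 1 0 := by
    have h1 := (EuclideanSpace.proj (𝕜 := ℝ) (0 : Fin 2)).hasFDerivAt.comp_hasDerivAt (0 : ℝ)
      (hh.comp_hasDerivAt (0 : ℝ) hvd)
    have h2 : EuclideanSpace.proj (𝕜 := ℝ) (0 : Fin 2)
        (fderiv ℝ S.h (v 0) ((1 / ‖Dinf‖ ^ 2) • Dinf)) = 1 := by
      change (fderiv ℝ S.h (v 0) ((1 / ‖Dinf‖ ^ 2) • Dinf)) 0 = 1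
      rw [hv0, S.fderiv_h_coord_zero hxU hxinf_stable hDinf, inner_smul_right,
        real_inner_self_eq_norm_sq]
      field_simp
    rw [h2] at h1
    exact h1
  have ha0 : a 0 = 0 := by simp only [hadef, hv0, hx0]
  have hat : Tendsto a (𝓝[>] 0) (𝓝 0) := by
    have := had.continuousAt.tendsto
    rw [ha0] at this
    exact this.mono_left nhdsWithin_le_nhds
  have hay : Tendsto (fun y => a y / y) (𝓝[>] 0) (𝓝 1) := by
    have := had.tendsto_slope_zero_right
    simp only [zero_add, ha0, sub_zero, smul_eq_mul] at this
    refine this.congr fun y => ?_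
    ring
  have hbt : Tendsto b (𝓝[>] 0) (𝓝 xbinf) := by
    have h1 : ContinuousAt b 0 :=
      (EuclideanSpace.proj (𝕜 := ℝ) (1 : Fin 2)).continuous.continuousAt.comp (hh.continuousAt.comp hvd.continuousAt)
    have := h1.tendsto
    have hb0 : b 0 = xbinf := by simp only [hbdef, hv0, hx1]
    rw [hb0] at this
    exact this.mono_left nhdsWithin_le_nhds
  have hypos : ∀ᶠ y : ℝ in 𝓝[>] 0, 0 < y := self_mem_nhdsWithin
  have hapos : ∀ᶠ y in 𝓝[>] 0, 0 < a y := by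
    filter_upwards [hay.eventually_const_lt one_pos, hypos] with y h1 h2
    exact (div_pos_iff_of_pos_right h2).1 h1
  have hbpos : ∀ᶠ y in 𝓝[>] 0, 0 < b y := hbt.eventually_const_lt hxbinf_pos
  have hvs : ∀ᶠ y in 𝓝[>] 0, ‖v y‖ < S.delta / 8 :=
    nhdsWithin_le_nhds (hvd.continuousAt.norm.eventually_lt_const
      (show ‖v 0‖ < S.delta / 8 by rwa [hv0]))
  obtain ⟨s, hs, hcross⟩ := S.exists_crossing hvs hat hapos hxbinf_pos hbt T'
  set C : ℝ → Set ℝ := fun y => {t : ℝ | T' ≤ t ∧ |S.phi (-t) (v y) 0| = |S.phi (-t) (v y) 1|}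
    with hC
  set τ : ℝ → ℝ := fun y => sInf (C y) with hτ
  have hCbdd : ∀ y, BddBelow (C y) := fun y => ⟨T', fun t ht => ht.1⟩
  have hCcl : ∀ y, IsClosed (C y) := fun y => by
    have hcoord : ∀ i : Fin 2, Continuous fun t => |S.phi (-t) (v y) i| := fun i =>
      ((EuclideanSpace.proj (𝕜 := ℝ) i).continuous.comp (S.continuous_backward (v y))).abs
    exact isClosed_Ici.inter (isClosed_eq (hcoord 0) (hcoord 1))
  have hτC : ∀ᶠ y in 𝓝[>] 0, τ y ∈ C y ∧ τ y ≤ s y := by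
    filter_upwards [hcross] with y ⟨t, ht, htd⟩
    have htC : t ∈ C y := ⟨ht.1, htd⟩
    exact ⟨(hCcl y).csInf_mem ⟨t, htC⟩ (hCbdd y), (csInf_le (hCbdd y) htC).trans ht.2⟩
  have hτtop : Tendsto τ (𝓝[>] 0) atTop := by
    refine tendsto_atTop.2 fun K => ?_
    have hne := S.no_early_crossing hvd.continuousAt (by rwa [hv0]) ha0 hT'
      (by rw [hv0]; exact hdiag) K
    filter_upwards [nhdsWithin_le_nhds hne, hτC] with y h1 h2
    by_contra! hlt
    exact (h1 (τ y) ⟨h2.1.1, hlt.le⟩).ne h2.1.2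
  set E0 : ℝ → ℝ := fun y => exp (S.mu * τ y) * a y with hE0
  set E1 : ℝ → ℝ := fun y => exp (-(S.lam * τ y)) * b y with hE1
  have hE0t : Tendsto E0 (𝓝[>] 0) (𝓝 0) := by
    refine squeeze_zero' ?_ ?_ hs
    · filter_upwards [hapos] with y h
      positivity
    · filter_upwards [hapos, hτC] with y h h2
      have := h2.2
      have h : 0 ≤ S.h (v y) 0 := h.le
      simp only [hE0, hadef]
      gcongr
  have hE1t : Tendsto E1 (𝓝[>] 0) (𝓝 0) := by
    have := (tendsto_exp_neg_atTop_nhds_zero.comp (hτtop.const_mul_atTop hlam)).mul hbt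
    simpa using this
  have hEt : Tendsto (fun y => vec2 (E0 y) (E1 y)) (𝓝[>] 0) (𝓝 0) := by
    have := (continuous_vec2.tendsto (0, 0)).comp (hE0t.prodMk_nhds hE1t)
    have h00 : vec2 0 0 = 0 := vec2_eta 0
    rwa [h00] at this
  have htraj : ∀ᶠ y in 𝓝[>] 0, S.phi (-τ y) (v y) = S.hinv (vec2 (E0 y) (E1 y)) := by
    filter_upwards [hvs, hapos, hτC, hE0t.eventually_le_const (show 0 < S.delta / 2 by positivity)]
      with y h1 h2 h3 h4
    exact S.phi_eq_hinv h1 (T := τ y) (by rwa [abs_of_pos (show 0 < S.h (v y) 0 from h2)])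
      ⟨hT'.trans h3.1.1, le_rfl⟩
  have ho : ∀ i : Fin 2,
      (fun y => S.phi (-τ y) (v y) i - vec2 (E0 y) (E1 y) i) =o[𝓝[>] 0] fun y => E0 y + E1 y := by
    intro i
    have h1 := S.hinv_littleO.comp_tendsto hEt
    refine (Asymptotics.IsBigO.of_bound 1 ?_).trans_isLittleO
      (h1.trans_isBigO (Asymptotics.IsBigO.of_bound 1 ?_))
    · filter_upwards [htraj] with y hy
      rw [hy, one_mul]
      exact abs_coord_le (S.hinv (vec2 (E0 y) (E1 y)) - vec2 (E0 y) (E1 y)) i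
    · filter_upwards [hapos, hbpos] with y h2 h3
      have p0 : 0 < E0 y := by positivity
      have p1 : 0 < E1 y := by positivity
      have := norm_vec2_le (E0 y) (E1 y)
      rw [one_mul, Real.norm_eq_abs, abs_of_pos (add_pos p0 p1)]
      rwa [abs_of_pos p0, abs_of_pos p1] at this
  set α : ℝ := S.lam / (S.lam + S.mu) with hα
  set β : ℝ := S.mu / (S.lam + S.mu) with hβ
  have hαβ : α + β = 1 := by rw [hα, hβ]; field_simp
  have hratio := crossing_asymptotics (E0 := E0) (E1 := E1) (α := α) (β := β)
    (by filter_upwards [hapos] with y h using by positivity)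
    (by filter_upwards [hbpos] with y h using by positivity)
    (ho 0) (ho 1) (hτC.mono fun y h => h.1.2) hαβ
  have hfin := (hratio.mul (hay.rpow_const (p := α) (Or.inl one_ne_zero))).mul
    (hbt.rpow_const (p := β) (Or.inl hxbinf_pos.ne'))
  rw [one_rpow, one_mul, one_mul] at hfin
  refine hfin.congr' ?_
  filter_upwards [hapos, hbpos, hypos] with y h1 h2 h3
  -- The exponentials cancel because `μ * α = λ * β`.
  have hinv : E0 y ^ α * E1 y ^ β = a y ^ α * b y ^ β := by
    simp only [hE0, hE1]
    rw [mul_rpow (exp_pos _).le h1.le, mul_rpow (exp_pos _).le h2.le, ← exp_mul, ← exp_mul,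
      mul_mul_mul_comm, ← exp_add]
    have : S.mu * τ y * α + -(S.lam * τ y) * β = 0 := by
      rw [hα, hβ]; ring
    rw [this, exp_zero, one_mul]
  have hgy : g y = S.phi (-τ y) (v y) 0 := hg y
  rw [hinv, hgy, div_rpow h1.le h3.le, rpow_neg h3.le]
  have := rpow_pos_of_pos h1 α
  have := rpow_pos_of_pos h2 β
  have := rpow_pos_of_pos h3 α
  field_simp
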